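/- Let X be a real Banach space with a Schauder basis (e_n). Then (e_n) satisfies ‖x − G_m(x)‖ ≤ σ̃^R_m(x) for all x ∈ X, all m ∈ ℕ, and every greedy ordering (i.e., it is 1-reverse partially greedy) if and only if for every x ∈ X, all indices j > k with j, k ∉ supp(x), and all real s, t with |s| = |t| ≥ sup_i |e_i^*(x)|, one has max(‖x‖, ‖x + s·e_j‖) ≤ ‖x + t·e_k‖. -/

import Mathlib

open Filter Topology

/-- A Schauder basis of a real normed space `X`, given by basis vectors `e n` together with
biorthogonal (coordinate) functionals `f n`, such that every `x` is the limit of its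
partial-sum expansion `∑_{n < N} f n x • e n`. -/
structure SchauderBasisSys (X : Type*) [NormedAddCommGroup X] [NormedSpace ℝ X] where
  e : ℕ → X
  f : ℕ → X →L[ℝ] ℝ
  biorth : ∀ m n : ℕ, f m (e n) = if m = n then (1 : ℝ) else 0
  expansion : ∀ x : X,
    Filter.Tendsto (fun N : ℕ => ∑ n ∈ Finset.range N, f n x • e n) Filter.atTop (nhds x)

namespace SchauderBasisSys

variable {X : Type*} [NormedAddCommGroup X] [NormedSpace ℝ X]

/-- The coordinate projection onto a finite set `A` of indices: `P_A x = ∑_{i ∈ A} e_i^*(x) e_i`. -/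
noncomputable def P (S : SchauderBasisSys X) (A : Finset ℕ) (x : X) : X :=
  ∑ i ∈ A, S.f i x • S.e i

/-- The indicator vector `1_A = ∑_{i ∈ A} e_i`. -/
noncomputable def ind (S : SchauderBasisSys X) (A : Finset ℕ) : X :=
  ∑ i ∈ A, S.e i

/-- A greedy ordering for `x`: an injection `ρ : ℕ → ℕ` whose range contains the support of `x`
and which rearranges the coordinates of `x` in nonincreasing order of absolute value. -/
def IsGreedyOrdering (S : SchauderBasisSys X) (x : X) (ρ : ℕ → ℕ) : Prop :=
  Function.Injective ρ ∧ (∀ n : ℕ, S.f n x ≠ 0 → n ∈ Set.range ρ) ∧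
    ∀ j k : ℕ, j ≤ k → |S.f (ρ k) x| ≤ |S.f (ρ j) x|

/-- The greedy set `Λ_m(x) = {ρ(0), …, ρ(m-1)}` associated to a greedy ordering `ρ`. -/
def Lam (ρ : ℕ → ℕ) (m : ℕ) : Finset ℕ := (Finset.range m).image ρ

/-- The `m`-th greedy approximation `G_m(x) = ∑_{j < m} e_{ρ(j)}^*(x) e_{ρ(j)}`. -/
noncomputable def G (S : SchauderBasisSys X) (x : X) (ρ : ℕ → ℕ) (m : ℕ) : X :=
  ∑ j ∈ Finset.range m, S.f (ρ j) x • S.e (ρ j)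

/-- Quasi-greedy: `‖G_m(x)‖ ≤ K ‖x‖` uniformly. -/
def QuasiGreedy (S : SchauderBasisSys X) : Prop :=
  ∃ K : ℝ, ∀ (x : X) (ρ : ℕ → ℕ) (m : ℕ),
    S.IsGreedyOrdering x ρ → ‖S.G x ρ m‖ ≤ K * ‖x‖

/-- Conservative: `‖1_A‖ ≤ Γ ‖1_B‖` whenever `|A| ≤ |B|` and `max A < min B`. -/
def Conservative (S : SchauderBasisSys X) : Prop :=
  ∃ Γ : ℝ, ∀ A B : Finset ℕ, A.card ≤ B.card →
    (∀ i ∈ A, ∀ j ∈ B, i < j) → ‖S.ind A‖ ≤ Γ * ‖S.ind B‖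

/-- Reverse conservative: `‖1_A‖ ≤ Γ ‖1_B‖` whenever `|A| ≤ |B|` and `max B < min A`. -/
def ReverseConservative (S : SchauderBasisSys X) : Prop :=
  ∃ Γ : ℝ, ∀ A B : Finset ℕ, A.card ≤ B.card →
    (∀ i ∈ A, ∀ j ∈ B, j < i) → ‖S.ind A‖ ≤ Γ * ‖S.ind B‖

/-- Partially greedy: `‖x - G_m(x)‖ ≤ C ‖∑_{n ≥ m} e_n^*(x) e_n‖ = C ‖x - P_{[0,m)}(x)‖`. -/
def PartiallyGreedy (S : SchauderBasisSys X) : Prop :=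
  ∃ C : ℝ, ∀ (x : X) (ρ : ℕ → ℕ) (m : ℕ), S.IsGreedyOrdering x ρ →
    ‖x - S.G x ρ m‖ ≤ C * ‖x - S.P (Finset.range m) x‖

/-- Almost greedy: `‖x - G_m(x)‖ ≤ C inf{‖x - P_A(x)‖ : |A| ≤ m}`. -/
def AlmostGreedy (S : SchauderBasisSys X) : Prop :=
  ∃ C : ℝ, ∀ (x : X) (ρ : ℕ → ℕ) (m : ℕ) (A : Finset ℕ), S.IsGreedyOrdering x ρ →
    A.card ≤ m → ‖x - S.G x ρ m‖ ≤ C * ‖x - S.P A x‖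

end SchauderBasisSys

namespace SchauderBasisSys

variable {X : Type*} [NormedAddCommGroup X] [NormedSpace ℝ X]

/-- `max(‖x‖, ‖x + s e_j‖) ≤ ‖x + t e_k‖` whenever `j > k` lie outside the support of `x` and
`|s| = |t|` dominates the coordinates of `x`. -/
def RightShiftDominated (S : SchauderBasisSys X) : Prop :=
  ∀ (x : X) (j k : ℕ), k < j → S.f j x = 0 → S.f k x = 0 →
    ∀ s t : ℝ, |s| = |t| → (∀ i : ℕ, |S.f i x| ≤ |t|) →
    max ‖x‖ ‖x + s • S.e j‖ ≤ ‖x + t • S.e k‖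

/-- The inequality `‖x - G_m(x)‖ ≤ σ̃^R_m(x)`, for all `x`, `m` and greedy orderings. -/
def OneReversePartiallyGreedy (S : SchauderBasisSys X) : Prop :=
  ∀ (x : X) (ρ : ℕ → ℕ) (m : ℕ) (A : Finset ℕ),
    S.IsGreedyOrdering x ρ → A.card ≤ m →
    (∀ i ∈ A, ∀ j ∈ Lam ρ m, j < i) →
    ‖x - S.G x ρ m‖ ≤ ‖x - S.P A x‖

theorem f_smul_e (S : SchauderBasisSys X) (n k : ℕ) (t : ℝ) :
    S.f n (t • S.e k) = if n = k then t else 0 := by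
  simp [S.biorth]

theorem f_P (S : SchauderBasisSys X) (n : ℕ) (A : Finset ℕ) (x : X) :
    S.f n (S.P A x) = if n ∈ A then S.f n x else 0 := by
  simp [P, S.biorth]

theorem G_eq_P_Lam (S : SchauderBasisSys X) (x : X) {ρ : ℕ → ℕ} (hρ : Function.Injective ρ)
    (m : ℕ) : S.G x ρ m = S.P (Lam ρ m) x := by
  rw [G, P, Lam, Finset.sum_image fun _ _ _ _ h => hρ h]

theorem tendsto_P_range (S : SchauderBasisSys X) (x : X) :
    Tendsto (fun N : ℕ => S.P (Finset.range N) x) atTop (𝓝 x) :=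
  S.expansion x

/-- A finitely supported nonnegative sequence has a decreasing rearrangement that starts at any
prescribed maximizer. -/
theorem exists_perm_antitone_of_finite_support {a : ℕ → ℝ} (ha : ∀ i, 0 ≤ a i) {N : ℕ}
    (hN : ∀ i, N ≤ i → a i = 0) {k : ℕ} (hk : ∀ i, a i ≤ a k) :
    ∃ ρ : Equiv.Perm ℕ, ρ 0 = k ∧ Antitone (a ∘ ρ) := by
  let σ : Equiv.Perm (Fin N) := Tuple.sort fun i : Fin N => -a i
  have hσ : Monotone ((fun i : Fin N => -a i) ∘ σ) := Tuple.monotone_sort _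
  let τ : Equiv.Perm ℕ := σ.extendDomain Fin.equivSubtype
  have hτ_lt (i : ℕ) (hi : i < N) : τ i = σ ⟨i, hi⟩ :=
    Equiv.Perm.extendDomain_apply_subtype σ Fin.equivSubtype hi
  have hτ_ge (i : ℕ) (hi : N ≤ i) : τ i = i :=
    Equiv.Perm.extendDomain_apply_not_subtype σ Fin.equivSubtype hi.not_gt
  have hτ : Antitone (a ∘ τ) := by
    intro i j hij
    simp only [Function.comp_apply]
    rcases lt_or_ge j N with hj | hj
    · have h := hσ (show (⟨i, hij.trans_lt hj⟩ : Fin N) ≤ ⟨j, hj⟩ from hij)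
      rw [hτ_lt i (hij.trans_lt hj), hτ_lt j hj]
      simpa using h
    · rw [hτ_ge j hj, hN j hj]
      exact ha _
  set l := τ.symm k with hl
  have hτl : τ l = k := by simp [hl]
  have h0 : a (τ 0) = a (τ l) := by
    refine le_antisymm ?_ (hτ (Nat.zero_le l))
    rw [hτl]
    exact hk _
  refine ⟨(Equiv.swap 0 l).trans τ, by simp [hτl], ?_⟩
  convert hτ using 1
  funext i
  simp only [Function.comp_apply, Equiv.trans_apply]
  rcases eq_or_ne i 0 with rfl | hi0
  · rw [Equiv.swap_apply_left, h0]
  rcases eq_or_ne i l with rfl | hil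
  · rw [Equiv.swap_apply_right, h0]
  · rw [Equiv.swap_apply_of_ne_of_ne hi0 hil]

theorem exists_isGreedyOrdering (S : SchauderBasisSys X) {x : X} {N : ℕ}
    (hN : ∀ i, N ≤ i → S.f i x = 0) {k : ℕ} (hk : ∀ i, |S.f i x| ≤ |S.f k x|) :
    ∃ ρ : ℕ → ℕ, S.IsGreedyOrdering x ρ ∧ ρ 0 = k := by
  obtain ⟨ρ, hρ0, hρ⟩ := exists_perm_antitone_of_finite_support (a := fun i => |S.f i x|)
    (fun _ => abs_nonneg _) (N := N) (fun i hi => by simp [hN i hi]) hk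
  exact ⟨ρ, ⟨ρ.injective, fun n _ => ρ.surjective n, fun _ _ h => hρ h⟩, hρ0⟩

/-- Removing one largest coordinate of a finitely supported vector gives at most the norm obtained
by removing instead at most one coordinate further to the right. -/
theorem OneReversePartiallyGreedy.norm_sub_le {S : SchauderBasisSys X}
    (h : S.OneReversePartiallyGreedy) {x : X} {N : ℕ} (hN : ∀ i, N ≤ i → S.f i x = 0) {k : ℕ}
    (hk : ∀ i, |S.f i x| ≤ |S.f k x|) {A : Finset ℕ} (hA : A.card ≤ 1) (hkA : ∀ i ∈ A, k < i) :
    ‖x - S.f k x • S.e k‖ ≤ ‖x - S.P A x‖ := by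
  obtain ⟨ρ, hρ, rfl⟩ := S.exists_isGreedyOrdering hN hk
  simpa [G] using h x ρ 1 A hρ hA (by simpa [Lam] using hkA)

theorem OneReversePartiallyGreedy.rightShiftDominated {S : SchauderBasisSys X}
    (h : S.OneReversePartiallyGreedy) : S.RightShiftDominated := by
  intro x j k hkj hj hk s t hst ht
  have hx := S.tendsto_P_range x
  refine le_of_tendsto_of_tendsto' (hx.norm.max (hx.add_const _).norm) (hx.add_const _).norm
    fun N => ?_
  set y := S.P (Finset.range N) x with hy
  have hyle (i : ℕ) : |S.f i y| ≤ |t| := by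
    rw [hy, f_P]
    split_ifs
    · exact ht i
    · simp
  have hyj : S.f j y = 0 := by simp [hy, f_P, hj]
  have hyk : S.f k y = 0 := by simp [hy, f_P, hk]
  have hyN (i : ℕ) (hi : N ≤ i) : S.f i y = 0 := by simp [hy, f_P, hi.not_gt]
  refine max_le ?_ ?_
  · have hz (i : ℕ) : S.f i (y + t • S.e k) = if i = k then t else S.f i y := by
      rw [map_add, f_smul_e]
      split_ifs with hik
      · simp [hik, hyk]
      · simp
    have := h.norm_sub_le (x := y + t • S.e k) (N := max N (k + 1)) (k := k) (A := ∅)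
      (fun i hi => by rw [hz, if_neg (by grind), hyN i (by grind)])
      (fun i => by
        rw [hz, hz, if_pos rfl]
        split_ifs
        · rfl
        · exact hyle i)
      (by simp) (by simp)
    simpa [hz, P] using this
  · have hz (i : ℕ) : S.f i (y + s • S.e j + t • S.e k) =
        if i = k then t else if i = j then s else S.f i y := by
      rw [map_add, map_add, f_smul_e, f_smul_e]
      split_ifs with hij hik hik
      · omega
      · simp [hij, hyj]
      · simp [hik, hyk]
      · simp
    have := h.norm_sub_le (x := y + s • S.e j + t • S.e k) (N := max N (j + 1)) (k := k) (A := {j})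
      (fun i hi => by rw [hz, if_neg (by grind), if_neg (by grind), hyN i (by grind)])
      (fun i => by
        rw [hz, hz, if_pos rfl]
        split_ifs
        · rfl
        · exact hst.le
        · exact hyle i)
      (by simp) (by simpa using hkj)
    have hjs : S.f j (y + s • S.e j + t • S.e k) = s := by
      rw [hz, if_neg hkj.ne', if_pos rfl]
    rwa [P, Finset.sum_singleton, hjs, hz k, if_pos rfl, add_sub_cancel_right, add_right_comm,
      add_sub_cancel_right] at this

theorem RightShiftDominated.norm_le {S : SchauderBasisSys X} (h : S.RightShiftDominated) {z : X}
    {k : ℕ} (hk : S.f k z = 0) {t : ℝ} (ht : ∀ i, |S.f i z| ≤ |t|) :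
    ‖z‖ ≤ ‖z + t • S.e k‖ := by
  have hz := S.tendsto_P_range z
  refine le_of_tendsto_of_tendsto' hz.norm (hz.add_const _).norm fun N => ?_
  refine (le_max_left _ _).trans (h (S.P (Finset.range N) z) (max N (k + 1)) k (by grind)
    (by simp [f_P]) (by simp [f_P, hk]) t t rfl fun i => ?_)
  rw [f_P]
  split_ifs
  · exact ht i
  · simp

theorem RightShiftDominated.norm_add_smul_le {S : SchauderBasisSys X} (h : S.RightShiftDominated)
    {z : X} {j k : ℕ} (hkj : k < j) (hj : S.f j z = 0) (hk : S.f k z = 0) {s t : ℝ}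
    (hst : |s| ≤ |t|) (ht : ∀ i, |S.f i z| ≤ |t|) :
    ‖z + s • S.e j‖ ≤ ‖z + t • S.e k‖ := by
  have hpos := (le_max_right _ _).trans (h z j k hkj hj hk |t| t (abs_abs t) ht)
  have hneg := (le_max_right _ _).trans (h z j k hkj hj hk (-|t|) t (by simp) ht)
  have hconv : ConvexOn ℝ Set.univ fun r : ℝ => ‖z + r • S.e j‖ := by
    refine ⟨convex_univ, fun a _ b _ p q hp hq hpq => ?_⟩
    have hsplit : z + (p • a + q • b) • S.e j =
        p • (z + a • S.e j) + q • (z + b • S.e j) := by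
      have hz : z = p • z + q • z := by rw [← add_smul, hpq, one_smul]
      nth_rewrite 1 [hz]
      simp only [smul_eq_mul]
      module
    beta_reduce
    rw [hsplit]
    refine (norm_add_le _ _).trans_eq ?_
    rw [norm_smul, norm_smul, Real.norm_of_nonneg hp, Real.norm_of_nonneg hq, smul_eq_mul,
      smul_eq_mul]
  have hs : s ∈ Set.Icc (-|t|) |t| := abs_le.mp hst
  exact (hconv.le_max_of_mem_Icc (Set.mem_univ _) (Set.mem_univ _) hs).trans (max_le hneg hpos)

/-- The greedy inequality under a hypothesis on `ρ` that only concerns its first `m` values: each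
`ρ i` is a largest coordinate of `x` among those not yet selected. -/
theorem RightShiftDominated.norm_sub_P_Lam_le {S : SchauderBasisSys X}
    (h : S.RightShiftDominated) {ρ : ℕ → ℕ} (hρ : Function.Injective ρ) (m : ℕ) (x : X)
    (hx : ∀ i < m, ∀ n ∉ Lam ρ i, |S.f n x| ≤ |S.f (ρ i) x|) (A : Finset ℕ) (hA : A.card ≤ m)
    (hΛA : ∀ i ∈ A, ∀ j ∈ Lam ρ m, j < i) :
    ‖x - S.P (Lam ρ m) x‖ ≤ ‖x - S.P A x‖ := by
  induction m generalizing x A with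
  | zero => simp [Lam, Finset.card_eq_zero.mp (Nat.le_zero.mp hA)]
  | succ m ih =>
    have hnot : ρ m ∉ Lam ρ m := by
      simp only [Lam, Finset.mem_image, Finset.mem_range, not_exists, not_and]
      intro i hi him
      exact hi.ne (hρ him)
    have hLam : Lam ρ (m + 1) = insert (ρ m) (Lam ρ m) := by
      rw [Lam, Finset.range_add_one, Finset.image_insert, Lam]
    have hxm := hx m m.lt_succ_self
    have hP (y : X) : S.P (Lam ρ (m + 1)) y = S.f (ρ m) y • S.e (ρ m) + S.P (Lam ρ m) y := by
      rw [hLam, P, Finset.sum_insert hnot, P]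
    rw [hLam] at hΛA
    rcases A.eq_empty_or_nonempty with rfl | ⟨j, hj⟩
    · refine le_trans ?_ (ih x (fun i hi => hx i (by omega)) ∅ (by simp) (by simp))
      refine (h.norm_le (k := ρ m) (t := S.f (ρ m) x) ?_ fun i => ?_).trans_eq ?_
      · simp [f_P, hLam]
      · rw [map_sub, f_P, hLam]
        split_ifs with hi
        · simp
        · simpa using hxm i (by grind)
      · rw [hP]
        congr 1
        abel
    · have hjm : ρ m < j := hΛA j hj _ (Finset.mem_insert_self _ _)
      have hjΛ : j ∉ Lam ρ m := fun hmem =>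
        (hΛA j hj j (Finset.mem_insert_of_mem hmem)).false
      set y := x - S.f j x • S.e j with hy
      have hfy (n : ℕ) : S.f n y = if n = j then 0 else S.f n x := by
        rw [hy, map_sub, f_smul_e]
        split_ifs with hn
        · simp [hn]
        · simp
      have hPy {B : Finset ℕ} (hB : j ∉ B) : S.P B y = S.P B x := by
        refine Finset.sum_congr rfl fun i hi => ?_
        rw [hfy, if_neg (ne_of_mem_of_not_mem hi hB)]
      have hρy (i : ℕ) (hi : i < m + 1) : S.f (ρ i) y = S.f (ρ i) x := by
        rw [hfy, if_neg]
        have : ρ i ∈ insert (ρ m) (Lam ρ m) :=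
          hLam ▸ Finset.mem_image_of_mem ρ (Finset.mem_range.mpr hi)
        exact (hΛA j hj _ this).ne
      have hyx (n : ℕ) : |S.f n y| ≤ |S.f n x| := by
        rw [hfy]
        split_ifs <;> simp
      have hstep : ‖x - S.P (Lam ρ (m + 1)) x‖ ≤ ‖y - S.P (Lam ρ m) y‖ := by
        have := h.norm_add_smul_le (z := y - S.P (Lam ρ (m + 1)) y) hjm
          (by simp [f_P, hfy]) (by simp [f_P, hLam]) (hxm j hjΛ) fun i => by
            rw [map_sub, f_P, hLam]
            split_ifs with hi
            · simp
            · simpa using (hyx i).trans (hxm i (by grind))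
        convert this using 2
        · rw [hPy (by grind), hy]
          abel
        · rw [hP, hρy m m.lt_succ_self]
          abel
      refine hstep.trans ((ih y (fun i hi n hn => ?_) (A.erase j) ?_ ?_).trans_eq ?_)
      · rw [hρy i (by omega)]
        exact (hyx n).trans (hx i (by omega) n hn)
      · rw [Finset.card_erase_of_mem hj]
        omega
      · exact fun i hi l hl => hΛA i (Finset.mem_of_mem_erase hi) l (Finset.mem_insert_of_mem hl)
      · rw [hPy (Finset.notMem_erase j A), hy]
        have : S.P A x = S.f j x • S.e j + S.P (A.erase j) x :=
          (Finset.add_sum_erase A _ hj).symm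
        rw [this]
        congr 1
        abel

theorem RightShiftDominated.oneReversePartiallyGreedy {S : SchauderBasisSys X}
    (h : S.RightShiftDominated) : S.OneReversePartiallyGreedy := by
  rintro x ρ m A ⟨hρ, hrange, hanti⟩ hA hΛA
  rw [S.G_eq_P_Lam x hρ]
  refine h.norm_sub_P_Lam_le hρ m x (fun i _ n hn => ?_) A hA hΛA
  by_cases hnx : S.f n x = 0
  · simp [hnx]
  obtain ⟨l, rfl⟩ := hrange n hnx
  refine hanti i l (not_lt.mp fun hl => hn ?_)
  exact Finset.mem_image_of_mem ρ (Finset.mem_range.mpr hl)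

end SchauderBasisSys

open SchauderBasisSys

/-- A Schauder basis satisfies `‖x - G_m(x)‖ ≤ σ̃^R_m(x)` for all `x`,
`m` and greedy orderings (is `1`-reverse partially greedy) if and only if for every `x`,
all indices `j > k` outside the support of `x`, and all reals `s, t` with
`|s| = |t| ≥ sup_i |e_i^*(x)|`, one has `max(‖x‖, ‖x + s e_j‖) ≤ ‖x + t e_k‖`. -/
theorem stmt_13 {X : Type*} [NormedAddCommGroup X] [NormedSpace ℝ X] [CompleteSpace X]
    (S : SchauderBasisSys X) :
    (∀ (x : X) (ρ : ℕ → ℕ) (m : ℕ) (A : Finset ℕ),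
        S.IsGreedyOrdering x ρ → A.card ≤ m →
        (∀ i ∈ A, ∀ j ∈ Lam ρ m, j < i) →
        ‖x - S.G x ρ m‖ ≤ ‖x - S.P A x‖) ↔
      (∀ (x : X) (j k : ℕ), k < j → S.f j x = 0 → S.f k x = 0 →
        ∀ s t : ℝ, |s| = |t| → (∀ i : ℕ, |S.f i x| ≤ |t|) →
        max ‖x‖ ‖x + s • S.e j‖ ≤ ‖x + t • S.e k‖) := by
  exact ⟨OneReversePartiallyGreedy.rightShiftDominated,
    RightShiftDominated.oneReversePartiallyGreedy⟩
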